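/- Let H be a real Hilbert space, C ⊆ H nonempty closed convex, f : C × C → ℝ a bifunction satisfying (A1)–(A4), A : C → H an α-inverse strongly monotone mapping, and S : C → C an asymptotically κ-strictly pseudocontractive mapping with sequence {k_n} ⊆ [1,∞), k_n → 1. Suppose the parameters satisfy 0 < α_n < 1 with limsup α_n < 1, κ ≤ β_n ≤ b < 1, 0 < d ≤ r_n ≤ e < 2α, and that F = GEP(f,A) ∩ F(S) is nonempty and bounded with F ⊆ {v : ‖v‖ ≤ ω}. Let x_0 ∈ C, C_0 = C, and for n ≥ 0: y_n ∈ C satisfies f(y_n, y) + ⟨A x_n, y − y_n⟩ + (1/r_n)⟨y − y_n, y_n − x_n⟩ ≥ 0 for all y ∈ C; z_n = α_n x_n + (1−α_n)(β_n y_n + (1−β_n) S^n y_n); C_{n+1} = {v ∈ C_n : ‖z_n − v‖² ≤ ‖x_n − v‖² + ε_n} with ε_n = (k_n − 1)(‖x_n‖ + ω)²; x_{n+1} = P_{C_{n+1}} x_0. Then {x_n} converges strongly to P_F x_0. -/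

import Mathlib

open scoped RealInnerProductSpace
open Filter Topology

/-- `p` is the metric projection of `x` onto `K`. -/
def IsProjOn {H : Type*} [NormedAddCommGroup H] (K : Set H) (x p : H) : Prop :=
  p ∈ K ∧ ∀ v ∈ K, ‖p - x‖ ≤ ‖v - x‖

/-- Scalar inequality giving Lipschitz continuity of strict pseudocontractions. -/
lemma aux_lip {s t K κ : ℝ} (hs : 0 ≤ s) (ht : 0 ≤ t) (hK : 0 ≤ K) (hκ0 : 0 ≤ κ) (hκ1 : κ < 1)
    (h : s ^ 2 ≤ K * t ^ 2 + κ * (t + s) ^ 2) :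
    s ≤ (√K + √κ) / (1 - √κ) * t := by
  have h1 : √κ < 1 := by
    rw [Real.sqrt_lt' one_pos]; simpa using hκ1
  have hp : 0 < 1 - √κ := by linarith
  have a1 := Real.sqrt_nonneg K
  have a2 := Real.sqrt_nonneg κ
  have h2 : s ≤ √K * t + √κ * (t + s) := by
    refine (sq_le_sq₀ hs (by positivity)).1 ?_
    have e1 : K = √K ^ 2 := (Real.sq_sqrt hK).symm
    have e2 : κ = √κ ^ 2 := (Real.sq_sqrt hκ0).symm
    have : 0 ≤ 2 * (√K * t) * (√κ * (t + s)) := by positivity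
    nlinarith
  rw [div_mul_eq_mul_div, le_div_iff₀ hp]
  linarith

section
variable {H : Type*} [NormedAddCommGroup H] [InnerProductSpace ℝ H]

/-- Convex combination identity. -/
lemma aux_comb (u v : H) (t : ℝ) :
    ‖t • u + (1 - t) • v‖ ^ 2 = t * ‖u‖ ^ 2 + (1 - t) * ‖v‖ ^ 2 - t * (1 - t) * ‖u - v‖ ^ 2 := by
  rw [norm_add_sq_real, norm_sub_sq_real, norm_smul, norm_smul, mul_pow, mul_pow,
    Real.norm_eq_abs, Real.norm_eq_abs, sq_abs, sq_abs, inner_smul_left, inner_smul_right]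
  simp only [conj_trivial]
  ring

/-- The resolvent estimate. -/
lemma aux_resolvent {x y v Ax Av : H} {α r e : ℝ} (hα : 0 < α) (hr : 0 < r) (hre : r ≤ e)
    (hism : α * ‖Ax - Av‖ ^ 2 ≤ ⟪Ax - Av, x - v⟫)
    (h : 0 ≤ ⟪Ax - Av, v - y⟫ + (1 / r) * ⟪v - y, y - x⟫) :
    ‖y - v‖ ^ 2 ≤ ‖x - v‖ ^ 2 - (1 - e / (2 * α)) * ‖y - x‖ ^ 2 := by
  have h1 : 0 ≤ r * ⟪Ax - Av, v - y⟫ + ⟪v - y, y - x⟫ := by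
    have := mul_nonneg hr.le h
    have e1 : r * (⟪Ax - Av, v - y⟫ + (1 / r) * ⟪v - y, y - x⟫)
      = r * ⟪Ax - Av, v - y⟫ + ⟪v - y, y - x⟫ := by field_simp
    linarith
  have e2 : ‖x - v‖ ^ 2 = ‖v - y‖ ^ 2 + 2 * ⟪v - y, y - x⟫ + ‖y - x‖ ^ 2 := by
    rw [← norm_add_sq_real, ← norm_neg]; congr 2; abel
  have e3 : ⟪Ax - Av, v - y⟫ = - ⟪Ax - Av, x - v⟫ - ⟪Ax - Av, y - x⟫ := by
    rw [← inner_neg_right, ← inner_sub_right]; congr 1; abel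
  have e4 : - ⟪Ax - Av, y - x⟫ ≤ ‖Ax - Av‖ * ‖y - x‖ :=
    (neg_le_abs _).trans (abs_real_inner_le_norm _ _)
  have e5 : ‖y - v‖ = ‖v - y‖ := norm_sub_rev _ _
  set D := ‖Ax - Av‖
  set s := ‖y - x‖
  have e6 : 0 ≤ r * (-(α * D ^ 2) + D * s) + ⟪v - y, y - x⟫ := by
    have : r * ⟪Ax - Av, v - y⟫ ≤ r * (-(α * D ^ 2) + D * s) := by
      apply mul_le_mul_of_nonneg_left _ hr.le; linarith
    linarith
  have e7 : -(α * D ^ 2) + D * s ≤ s ^ 2 / (4 * α) := by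
    rw [le_div_iff₀ (by positivity)]
    nlinarith [sq_nonneg (2 * α * D - s)]
  have e8 : r * (-(α * D ^ 2) + D * s) ≤ e * (s ^ 2 / (4 * α)) :=
    (mul_le_mul_of_nonneg_left e7 hr.le).trans
      (mul_le_mul_of_nonneg_right hre (by positivity))
  have e9 : e * (s ^ 2 / (4 * α)) = e / (2 * α) * s ^ 2 / 2 := by field_simp; ring
  rw [e5]
  nlinarith

/-- Estimate for one step of the algorithm. -/
lemma aux_step {x y v s : H} {a β κ k c ω : ℝ} (ha0 : 0 < a) (ha1 : a < 1)
    (hκβ : κ ≤ β) (hβ0 : 0 ≤ β) (hβ1 : β < 1) (hk : 1 ≤ k) (hc : 0 ≤ c)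
    (hs : ‖s - v‖ ^ 2 ≤ k * ‖y - v‖ ^ 2 + κ * ‖y - s‖ ^ 2)
    (hyv : ‖y - v‖ ^ 2 ≤ ‖x - v‖ ^ 2 - c * ‖y - x‖ ^ 2) (hv : ‖v‖ ≤ ω) :
    ‖a • x + (1 - a) • (β • y + (1 - β) • s) - v‖ ^ 2 + (1 - a) * (c * ‖y - x‖ ^ 2)
      ≤ ‖x - v‖ ^ 2 + (k - 1) * (‖x‖ + ω) ^ 2 := by
  have e1 : a • x + (1 - a) • (β • y + (1 - β) • s) - v
      = a • (x - v) + (1 - a) • ((β • y + (1 - β) • s) - v) := by module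
  have e2 : (β • y + (1 - β) • s) - v = β • (y - v) + (1 - β) • (s - v) := by module
  have h2 : ‖(β • y + (1 - β) • s) - v‖ ^ 2 ≤ k * ‖y - v‖ ^ 2 := by
    rw [e2, aux_comb]
    have : y - v - (s - v) = y - s := by abel
    rw [this]
    have q1 := mul_le_mul_of_nonneg_left hs (by linarith : 0 ≤ 1 - β)
    have q2 : 0 ≤ (1 - β) * (β - κ) * ‖y - s‖ ^ 2 :=
      mul_nonneg (mul_nonneg (by linarith) (by linarith)) (sq_nonneg _)
    have q3 : 0 ≤ β * (k - 1) * ‖y - v‖ ^ 2 :=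
      mul_nonneg (mul_nonneg (by linarith) (by linarith)) (sq_nonneg _)
    nlinarith
  have h3 : k * ‖y - v‖ ^ 2 ≤ k * ‖x - v‖ ^ 2 - c * ‖y - x‖ ^ 2 := by
    have q1 := mul_le_mul_of_nonneg_left hyv (by linarith : 0 ≤ k)
    have q2 : 0 ≤ (k - 1) * (c * ‖y - x‖ ^ 2) :=
      mul_nonneg (by linarith) (mul_nonneg hc (sq_nonneg _))
    nlinarith
  have h4 : ‖x - v‖ ^ 2 ≤ (‖x‖ + ω) ^ 2 := by
    apply pow_le_pow_left₀ (norm_nonneg _)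
    exact (norm_sub_le _ _).trans (by linarith)
  have h5 := mul_le_mul_of_nonneg_left (h2.trans h3) (by linarith : 0 ≤ 1 - a)
  have h6 : 0 ≤ a * (1 - a) * ‖x - v - ((β • y + (1 - β) • s) - v)‖ ^ 2 :=
    mul_nonneg (mul_nonneg (by linarith) (by linarith)) (sq_nonneg _)
  have h7 := mul_le_mul_of_nonneg_left h4 (by linarith : 0 ≤ k - 1)
  have h8 : 0 ≤ a * ((k - 1) * ‖x - v‖ ^ 2) :=
    mul_nonneg ha0.le (mul_nonneg (by linarith) (sq_nonneg _))
  rw [e1, aux_comb]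
  nlinarith

/-- Half-space type sets are convex. -/
lemma aux_convex (K : Set H) (hK : Convex ℝ K) (x z : H) (ε : ℝ) :
    Convex ℝ {v ∈ K | ‖z - v‖ ^ 2 ≤ ‖x - v‖ ^ 2 + ε} := by
  have : {v ∈ K | ‖z - v‖ ^ 2 ≤ ‖x - v‖ ^ 2 + ε}
      = K ∩ {v | (innerSL ℝ (x - z)) v ≤ (‖x‖ ^ 2 + ε - ‖z‖ ^ 2) / 2} := by
    ext v
    simp only [Set.mem_ofPred_eq, Set.mem_inter_iff, innerSL_apply_apply]
    refine and_congr_right fun _ => ?_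
    rw [norm_sub_sq_real, norm_sub_sq_real, inner_sub_left]
    constructor <;> intro h <;> linarith
  rw [this]
  exact hK.inter (convex_halfSpace_le (innerSL ℝ (x - z)).isLinear _)

/-- Projection inequality. -/
lemma aux_proj {K : Set H} (hK : Convex ℝ K) {x0 p w : H} (hp : IsProjOn K x0 p) (hw : w ∈ K) :
    ‖w - p‖ ^ 2 ≤ 2 * (‖w - x0‖ ^ 2 - ‖p - x0‖ ^ 2) := by
  have hm : (1 / 2 : ℝ) • w + (1 - 1 / 2 : ℝ) • p ∈ K :=
    hK hw hp.1 (by norm_num) (by norm_num) (by norm_num)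
  have h1 := hp.2 _ hm
  have e : (1 / 2 : ℝ) • w + (1 - 1 / 2 : ℝ) • p - x0
      = (1 / 2 : ℝ) • (w - x0) + (1 - 1 / 2 : ℝ) • (p - x0) := by module
  rw [e] at h1
  have h2 := pow_le_pow_left₀ (norm_nonneg _) h1 2
  rw [aux_comb] at h2
  have : w - x0 - (p - x0) = w - p := by abel
  rw [this] at h2
  nlinarith

/-- Minty type lemma. -/
lemma aux_minty (C : Set H) (hCcv : Convex ℝ C) (f : H → H → ℝ)
    (hfA1 : ∀ x ∈ C, f x x = 0)
    (hfA2 : ∀ x ∈ C, ∀ y ∈ C, f x y + f y x ≤ 0)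
    (hfA3 : ∀ x ∈ C, ∀ y ∈ C, ∀ z ∈ C,
      Filter.limsup (fun t : ℝ => f (t • z + (1 - t) • x) y) (nhdsWithin 0 (Set.Ioi 0))
        ≤ f x y)
    (hfA4conv : ∀ x ∈ C, ConvexOn ℝ C (f x))
    (hfA4lsc : ∀ x ∈ C, LowerSemicontinuousOn (f x) C)
    (p q : H) (hp : p ∈ C) (h : ∀ w ∈ C, f w p ≤ ⟪q, w - p⟫) :
    ∀ w ∈ C, 0 ≤ f p w + ⟪q, w - p⟫ := by
  intro w hw
  have hmem : ∀ᶠ t : ℝ in 𝓝[>] 0, 0 < t ∧ t < 1 := by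
    filter_upwards [Ioo_mem_nhdsGT (zero_lt_one' ℝ)] with t ht using ht
  have hwt : ∀ t : ℝ, 0 < t ∧ t < 1 → t • w + (1 - t) • p ∈ C := fun t ht =>
    hCcv hw hp ht.1.le (by linarith [ht.2]) (by ring)
  have hlow : ∀ᶠ t : ℝ in 𝓝[>] 0,
      -((1 - t) * ⟪q, w - p⟫) ≤ f (t • w + (1 - t) • p) w := by
    filter_upwards [hmem] with t ht
    have hc := hwt t ht
    have h1 := (hfA4conv _ hc).2 hw hp ht.1.le (by linarith [ht.2] : 0 ≤ 1 - t) (by ring)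
    rw [hfA1 _ hc] at h1
    have h2 := h _ hc
    have e : t • w + (1 - t) • p - p = t • (w - p) := by module
    rw [e, inner_smul_right] at h2
    simp only [smul_eq_mul] at h1
    have h3 := mul_le_mul_of_nonneg_left h2 (by linarith [ht.2] : 0 ≤ 1 - t)
    have h4 : 0 ≤ t * (f (t • w + (1 - t) • p) w + (1 - t) * ⟪q, w - p⟫) := by nlinarith
    have h5 := nonneg_of_mul_nonneg_right h4 ht.1
    linarith
  have htend : Tendsto (fun t : ℝ => t • w + (1 - t) • p) (𝓝[>] 0) (𝓝[C] p) := by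
    rw [tendsto_nhdsWithin_iff]
    refine ⟨?_, hmem.mono hwt⟩
    have : Tendsto (fun t : ℝ => t • w + (1 - t) • p) (𝓝 0) (𝓝 ((0:ℝ) • w + (1 - (0:ℝ)) • p)) :=
      Continuous.tendsto (by fun_prop) 0
    simp only [zero_smul, sub_zero, one_smul, zero_add] at this
    exact this.mono_left nhdsWithin_le_nhds
  have hbdd : IsBoundedUnder (· ≤ ·) (𝓝[>] (0:ℝ)) (fun t : ℝ => f (t • w + (1 - t) • p) w) := by
    refine ⟨-(f w p - 1), ?_⟩
    rw [eventually_map]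
    have h1 := htend.eventually (hfA4lsc w hw p hp (f w p - 1) (by linarith))
    filter_upwards [h1, hmem] with t ht1 ht2
    have := hfA2 _ (hwt t ht2) w hw
    linarith
  have key : ∀ c, f p w < c → -⟪q, w - p⟫ ≤ c := by
    intro c hc
    have h1 := eventually_lt_of_limsup_lt (lt_of_le_of_lt (hfA3 p hp w hw w hw) hc) hbdd
    have hl : Tendsto (fun t : ℝ => -((1 - t) * ⟪q, w - p⟫)) (𝓝[>] 0) (𝓝 (-⟪q, w - p⟫)) := by
      have : Tendsto (fun t : ℝ => -((1 - t) * ⟪q, w - p⟫)) (𝓝 0)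
          (𝓝 (-((1 - (0:ℝ)) * ⟪q, w - p⟫))) := Continuous.tendsto (by fun_prop) 0
      simp only [sub_zero, one_mul] at this
      exact this.mono_left nhdsWithin_le_nhds
    refine le_of_tendsto hl ?_
    filter_upwards [h1, hlow] with t ht1 ht2
    linarith
  have := le_of_forall_gt_imp_ge_of_dense key
  linarith
end

/-- **Corollary 3.3.** Hybrid algorithm for a single generalized
equilibrium problem and a single asymptotically κ-strictly pseudocontractive mapping:
`{xₙ}` converges strongly to `P_F x₀`. -/
theorem corollary33_strong_convergence
    {H : Type*} [NormedAddCommGroup H] [InnerProductSpace ℝ H] [CompleteSpace H]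
    (C : Set H) (hCne : C.Nonempty) (hCcl : IsClosed C) (hCcv : Convex ℝ C)
    -- the bifunction f satisfies (A1)-(A4)
    (f : H → H → ℝ)
    (hfA1 : ∀ x ∈ C, f x x = 0)
    (hfA2 : ∀ x ∈ C, ∀ y ∈ C, f x y + f y x ≤ 0)
    (hfA3 : ∀ x ∈ C, ∀ y ∈ C, ∀ z ∈ C,
      Filter.limsup (fun t : ℝ => f (t • z + (1 - t) • x) y) (nhdsWithin 0 (Set.Ioi 0))
        ≤ f x y)
    (hfA4conv : ∀ x ∈ C, ConvexOn ℝ C (f x))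
    (hfA4lsc : ∀ x ∈ C, LowerSemicontinuousOn (f x) C)
    -- the operator A is α-inverse strongly monotone on C
    (A : H → H) (α : ℝ) (hα : 0 < α)
    (hism : ∀ x ∈ C, ∀ y ∈ C, α * ‖A x - A y‖ ^ 2 ≤ ⟪A x - A y, x - y⟫)
    -- the mapping S : C → C is asymptotically κ-strictly pseudocontractive with
    -- sequence {kₙ} ⊆ [1,∞), kₙ → 1
    (S : H → H) (hS : Set.MapsTo S C C)
    (κ : ℝ) (hκ0 : 0 ≤ κ) (hκ1 : κ < 1)
    (k : ℕ → ℝ) (hk1 : ∀ n, 1 ≤ k n)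
    (hklim : Filter.Tendsto k Filter.atTop (nhds 1))
    (hasym : ∀ n, 1 ≤ n → ∀ x ∈ C, ∀ y ∈ C,
      ‖S^[n] x - S^[n] y‖ ^ 2
        ≤ k n * ‖x - y‖ ^ 2 + κ * ‖(x - S^[n] x) - (y - S^[n] y)‖ ^ 2)
    -- the solution set F is nonempty and bounded by ω
    (F : Set H)
    (hF : F = {v ∈ C | ∀ y ∈ C, 0 ≤ f v y + ⟪A v, y - v⟫} ∩ {v | S v = v})
    (hFne : F.Nonempty) (ω : ℝ) (hω : 0 < ω) (hFb : ∀ v ∈ F, ‖v‖ ≤ ω)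
    -- control parameters
    (a : ℕ → ℝ) (ha0 : ∀ n, 0 < a n) (ha1 : ∀ n, a n < 1)
    (halimsup : Filter.limsup a Filter.atTop < 1)
    (β : ℕ → ℝ) (b : ℝ) (hbκ : κ < b) (hb1 : b < 1) (hβ : ∀ n, κ ≤ β n ∧ β n ≤ b)
    (r : ℕ → ℝ) (d e : ℝ) (hd : 0 < d) (he : e < 2 * α) (hr : ∀ n, d ≤ r n ∧ r n ≤ e)
    -- the iterates of Algorithm 1
    (x : ℕ → H) (y : ℕ → H) (z : ℕ → H) (Cset : ℕ → Set H)
    (hx0 : x 0 ∈ C) (hC0 : Cset 0 = C)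
    -- (i) yₙ solves the regularized generalized equilibrium problem
    (hy : ∀ n, y n ∈ C ∧ ∀ w ∈ C,
      0 ≤ f (y n) w + ⟪A (x n), w - y n⟫ + (1 / r n) * ⟪w - y n, y n - x n⟫)
    -- (ii) zₙ = αₙ xₙ + (1-αₙ)(βₙ yₙ + (1-βₙ) Sⁿ yₙ)
    (hz : ∀ n, z n = a n • x n + (1 - a n) • (β n • y n + (1 - β n) • S^[n] (y n)))
    -- (iii) Cₙ₊₁ = {v ∈ Cₙ : ‖zₙ - v‖² ≤ ‖xₙ - v‖² + εₙ}, εₙ = (kₙ - 1)(‖xₙ‖ + ω)²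
    (hCset : ∀ n, Cset (n + 1) =
      {v ∈ Cset n | ‖z n - v‖ ^ 2 ≤ ‖x n - v‖ ^ 2 + (k n - 1) * (‖x n‖ + ω) ^ 2})
    -- (vi) xₙ₊₁ = P_{Cₙ₊₁} x₀
    (hxproj : ∀ n, IsProjOn (Cset (n + 1)) (x 0) (x (n + 1))) :
    ∃ p, IsProjOn F (x 0) p ∧ Filter.Tendsto x Filter.atTop (nhds p) := by
  subst hF
  set F := {v ∈ C | ∀ y ∈ C, 0 ≤ f v y + ⟪A v, y - v⟫} ∩ {v | S v = v} with hFdef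
  obtain ⟨v0, hv0⟩ := hFne
  -- structure of the sets
  have hsub1 : ∀ n, Cset (n + 1) ⊆ Cset n := fun n => by
    rw [hCset]; exact fun v hv => hv.1
  have hanti : Antitone Cset := antitone_nat_of_succ_le hsub1
  have hsubC : ∀ n, Cset n ⊆ C := fun n => hC0 ▸ hanti (Nat.zero_le n)
  have hconv : ∀ n, Convex ℝ (Cset n) := by
    intro n
    induction n with
    | zero => rw [hC0]; exact hCcv
    | succ n ih => rw [hCset]; exact aux_convex _ ih _ _ _
  have hproj : ∀ n, IsProjOn (Cset n) (x 0) (x n) := by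
    intro n
    cases n with
    | zero => exact ⟨hC0 ▸ hx0, fun v _ => by simp⟩
    | succ n => exact hxproj n
  have hxC : ∀ n, x n ∈ C := fun n => hsubC n (hproj n).1
  have hSC : ∀ n, ∀ u ∈ C, S^[n] u ∈ C := fun n u hu => hS.iterate n hu
  set c := 1 - e / (2 * α) with hcdef
  have hc : 0 < c := by
    have : e / (2 * α) < 1 := by rw [div_lt_one (by positivity)]; exact he
    linarith
  -- one step estimate
  have hstep : ∀ n, ∀ v ∈ F, ‖z n - v‖ ^ 2 + (1 - a n) * (c * ‖y n - x n‖ ^ 2)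
      ≤ ‖x n - v‖ ^ 2 + (k n - 1) * (‖x n‖ + ω) ^ 2 := by
    intro n v hv
    have hvC : v ∈ C := hv.1.1
    have hSv : S^[n] v = v := Function.iterate_fixed hv.2 n
    rw [hz n]
    refine aux_step (κ := κ) (ha0 n) (ha1 n) (hβ n).1 (hκ0.trans (hβ n).1)
      ((hβ n).2.trans_lt hb1) (hk1 n) hc.le ?_ ?_ (hFb v hv)
    · rcases Nat.eq_zero_or_pos n with h0 | h0
      · have := hk1 n
        subst h0
        simp only [Function.iterate_zero, id_eq, sub_self, norm_zero]
        nlinarith [sq_nonneg ‖y 0 - v‖]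
      · have := hasym n h0 (y n) (hy n).1 v hvC
        rw [hSv] at this
        simpa using this
    · refine aux_resolvent hα (hd.trans_le (hr n).1) (hr n).2 (hism _ (hxC n) v hvC) ?_
      have h1 := (hy n).2 v hvC
      have h2 := hv.1.2 (y n) (hy n).1
      have h3 := hfA2 v hvC (y n) (hy n).1
      have h4 : ⟪A v, y n - v⟫ = - ⟪A v, v - y n⟫ := by
        rw [← inner_neg_right]; congr 1; abel
      rw [inner_sub_left]
      linarith
  have hFC : ∀ n, F ⊆ Cset n := by
    intro n
    induction n with
    | zero => rw [hC0]; exact fun v hv => hv.1.1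
    | succ n ih =>
      intro v hv
      rw [hCset]
      refine ⟨ih hv, ?_⟩
      have h1 := hstep n v hv
      have : 0 ≤ (1 - a n) * (c * ‖y n - x n‖ ^ 2) :=
        mul_nonneg (by linarith [ha1 n]) (mul_nonneg hc.le (sq_nonneg _))
      linarith
  -- convergence of x
  have hle : ∀ n, ∀ v ∈ F, ‖x n - x 0‖ ≤ ‖v - x 0‖ := fun n v hv => (hproj n).2 v (hFC n hv)
  have hmono : Monotone (fun n => ‖x n - x 0‖ ^ 2) := by
    intro m n hmn
    exact pow_le_pow_left₀ (norm_nonneg _) ((hproj m).2 _ (hanti hmn (hproj n).1)) 2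
  have hbd : BddAbove (Set.range (fun n => ‖x n - x 0‖ ^ 2)) := by
    refine ⟨‖v0 - x 0‖ ^ 2, ?_⟩
    rintro _ ⟨n, rfl⟩
    exact pow_le_pow_left₀ (norm_nonneg _) (hle n v0 hv0) 2
  have hcau : CauchySeq x := by
    have hT := tendsto_atTop_ciSup hmono hbd
    set L := ⨆ n, ‖x n - x 0‖ ^ 2
    have hb' : Tendsto (fun n => √(2 * (L - ‖x n - x 0‖ ^ 2))) atTop (𝓝 0) := by
      have : Tendsto (fun n => √(2 * (L - ‖x n - x 0‖ ^ 2))) atTop (𝓝 √(2 * (L - L))) :=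
        ((hT.const_sub L).const_mul 2).sqrt
      simpa using this
    refine cauchySeq_of_le_tendsto_0' _ ?_ hb'
    intro n m hnm
    apply Real.le_sqrt_of_sq_le
    have h1 := aux_proj (hconv n) (hproj n) (hanti hnm (hproj m).1)
    have h2 : ‖x m - x 0‖ ^ 2 ≤ L := le_ciSup hbd m
    rw [dist_eq_norm, norm_sub_rev]
    linarith
  obtain ⟨p, hxp⟩ := cauchySeq_tendsto_of_complete hcau
  have hpC : p ∈ C := hCcl.mem_of_tendsto hxp (Eventually.of_forall hxC)
  -- errors
  have heps : Tendsto (fun n => (k n - 1) * (‖x n‖ + ω) ^ 2) atTop (𝓝 0) := by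
    have : Tendsto (fun n => (k n - 1) * (‖x n‖ + ω) ^ 2) atTop
        (𝓝 ((1 - 1) * (‖p‖ + ω) ^ 2)) :=
      (hklim.sub_const 1).mul ((hxp.norm.add_const ω).pow 2)
    simpa using this
  have hxp1 : Tendsto (fun n => x (n + 1)) atTop (𝓝 p) := hxp.comp (tendsto_add_atTop_nat 1)
  have hzx : Tendsto (fun n => z n - x (n + 1)) atTop (𝓝 0) := by
    have h1 : Tendsto (fun n => ‖x n - x (n + 1)‖ ^ 2 + (k n - 1) * (‖x n‖ + ω) ^ 2) atTop
        (𝓝 0) := by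
      have := ((hxp.sub hxp1).norm.pow 2).add heps
      simpa using this
    have h2 : Tendsto (fun n => √(‖x n - x (n + 1)‖ ^ 2 + (k n - 1) * (‖x n‖ + ω) ^ 2)) atTop
        (𝓝 0) := by simpa using h1.sqrt
    refine squeeze_zero_norm (fun n => ?_) h2
    apply Real.le_sqrt_of_sq_le
    have := (hproj (n + 1)).1
    rw [hCset] at this
    exact this.2
  have hzp : Tendsto z atTop (𝓝 p) := by
    have := hzx.add hxp1
    simpa using this
  -- a bounded away from 1
  obtain ⟨δ, hδ, haδ⟩ : ∃ δ : ℝ, 0 < δ ∧ ∀ᶠ n in atTop, δ ≤ 1 - a n := by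
    obtain ⟨m, hm1, hm2⟩ := exists_between halimsup
    have hb' : IsBoundedUnder (· ≤ ·) atTop a :=
      isBoundedUnder_of ⟨1, fun n => (ha1 n).le⟩
    refine ⟨1 - m, by linarith, ?_⟩
    filter_upwards [eventually_lt_of_limsup_lt hm1 hb'] with n hn
    linarith
  have hyx : Tendsto (fun n => y n - x n) atTop (𝓝 0) := by
    have h1 : Tendsto (fun n => (‖x n - v0‖ ^ 2 - ‖z n - v0‖ ^ 2
        + (k n - 1) * (‖x n‖ + ω) ^ 2) / (δ * c)) atTop (𝓝 0) := by
      have := (((((hxp.sub_const v0).norm.pow 2).sub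
        ((hzp.sub_const v0).norm.pow 2)).add heps).div_const (δ * c))
      simpa using this
    have h2 := h1.sqrt
    rw [Real.sqrt_zero] at h2
    refine squeeze_zero_norm' ?_ h2
    filter_upwards [haδ] with n hn
    apply Real.le_sqrt_of_sq_le
    rw [le_div_iff₀ (by positivity)]
    have h3 := hstep n v0 hv0
    have h4 := mul_le_mul_of_nonneg_right hn (mul_nonneg hc.le (sq_nonneg ‖y n - x n‖))
    nlinarith
  have hyp : Tendsto y atTop (𝓝 p) := by
    have := hyx.add hxp
    simpa using this
  -- S^n y n - y n -> 0
  have hSy : Tendsto (fun n => S^[n] (y n) - y n) atTop (𝓝 0) := by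
    have hb0 : 0 < 1 - b := by linarith
    have h1 : Tendsto (fun n => (‖z n - x n‖ / δ + ‖y n - x n‖) / (1 - b)) atTop (𝓝 0) := by
      have := ((((hzp.sub hxp).norm.div_const δ).add hyx.norm).div_const (1 - b))
      simpa using this
    refine squeeze_zero_norm' ?_ h1
    filter_upwards [haδ] with n hn
    rw [le_div_iff₀ hb0]
    set u := β n • y n + (1 - β n) • S^[n] (y n) with hu
    have e1 : z n - x n = (1 - a n) • (u - x n) := by rw [hz n]; module
    have e2 : (1 - β n) • (S^[n] (y n) - y n) = (u - x n) - (y n - x n) := by rw [hu]; module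
    have h2 : ‖u - x n‖ ≤ ‖z n - x n‖ / δ := by
      rw [le_div_iff₀ hδ, e1, norm_smul, Real.norm_of_nonneg (by linarith), mul_comm]
      exact mul_le_mul_of_nonneg_right hn (norm_nonneg _)
    have h3 : (1 - β n) * ‖S^[n] (y n) - y n‖ ≤ ‖u - x n‖ + ‖y n - x n‖ := by
      have := norm_sub_le (u - x n) (y n - x n)
      rw [← e2, norm_smul, Real.norm_of_nonneg (by linarith [(hβ n).2])] at this
      exact this
    have h4 : (1 - b) * ‖S^[n] (y n) - y n‖ ≤ (1 - β n) * ‖S^[n] (y n) - y n‖ :=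
      mul_le_mul_of_nonneg_right (by linarith [(hβ n).2]) (norm_nonneg _)
    linarith
  -- Lipschitz
  have hlip : ∀ n, 1 ≤ n → ∀ u ∈ C, ∀ w ∈ C,
      ‖S^[n] u - S^[n] w‖ ≤ (√(k n) + √κ) / (1 - √κ) * ‖u - w‖ := by
    intro n hn u hu w hw
    refine aux_lip (norm_nonneg _) (norm_nonneg _) (by linarith [hk1 n]) hκ0 hκ1 ?_
    refine (hasym n hn u hu w hw).trans ?_
    have h1 : ‖(u - S^[n] u) - (w - S^[n] w)‖ ≤ ‖u - w‖ + ‖S^[n] u - S^[n] w‖ := by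
      have : (u - S^[n] u) - (w - S^[n] w) = (u - w) - (S^[n] u - S^[n] w) := by abel
      rw [this]; exact norm_sub_le _ _
    have h2 := mul_le_mul_of_nonneg_left (pow_le_pow_left₀ (norm_nonneg _) h1 2) hκ0
    linarith
  have hSnp : Tendsto (fun n => S^[n] p) atTop (𝓝 p) := by
    have h1 : Tendsto (fun n => (√(k n) + √κ) / (1 - √κ) * ‖p - y n‖) atTop (𝓝 0) := by
      have := ((hklim.sqrt.add_const √κ).div_const (1 - √κ)).mul
        ((tendsto_const_nhds (x := p)).sub hyp).norm
      simpa using this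
    have h2 : Tendsto (fun n => S^[n] p - S^[n] (y n)) atTop (𝓝 0) := by
      refine squeeze_zero_norm' ?_ h1
      filter_upwards [eventually_ge_atTop 1] with n hn
      exact hlip n hn p hpC _ (hy n).1
    have := (h2.add hSy).add hyp
    simpa using this
  have hSp : S p = p := by
    have h1 : Tendsto (fun n => S^[n + 1] p) atTop (𝓝 p) := hSnp.comp (tendsto_add_atTop_nat 1)
    have h2 : Tendsto (fun n => S^[n + 1] p) atTop (𝓝 (S p)) := by
      rw [tendsto_iff_norm_sub_tendsto_zero]
      have h3 : Tendsto (fun n => (√(k 1) + √κ) / (1 - √κ) * ‖S^[n] p - p‖) atTop (𝓝 0) := by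
        have := (hSnp.sub_const p).norm.const_mul ((√(k 1) + √κ) / (1 - √κ))
        simpa using this
      refine squeeze_zero (fun _ => norm_nonneg _) (fun n => ?_) h3
      have := hlip 1 le_rfl _ (hSC n p hpC) p hpC
      rw [Function.iterate_succ_apply']
      simpa using this
    exact tendsto_nhds_unique h2 h1
  -- A x n -> A p
  have hAx : Tendsto (fun n => A (x n)) atTop (𝓝 (A p)) := by
    rw [tendsto_iff_norm_sub_tendsto_zero]
    have h3 : Tendsto (fun n => ‖x n - p‖ / α) atTop (𝓝 0) := by
      have := (hxp.sub_const p).norm.div_const α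
      simpa using this
    refine squeeze_zero (fun _ => norm_nonneg _) (fun n => ?_) h3
    have h1 := hism _ (hxC n) p hpC
    have h2 := real_inner_le_norm (A (x n) - A p) (x n - p)
    rw [le_div_iff₀ hα]
    rcases (norm_nonneg (A (x n) - A p)).eq_or_lt with h0 | h0
    · rw [← h0]; simp
    · have h4 : ‖A (x n) - A p‖ * (‖A (x n) - A p‖ * α) ≤ ‖A (x n) - A p‖ * ‖x n - p‖ := by
        nlinarith
      exact le_of_mul_le_mul_left h4 h0
  have hmin : ∀ w ∈ C, f w p ≤ ⟪A p, w - p⟫ := by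
    intro w hw
    have hr1 : Tendsto (fun n => (1 / r n) * ⟪w - y n, y n - x n⟫) atTop (𝓝 0) := by
      have h1 : Tendsto (fun n => (1 / d) * |⟪w - y n, y n - x n⟫|) atTop (𝓝 0) := by
        have := (((tendsto_const_nhds (x := w)).sub hyp).inner hyx (𝕜 := ℝ)).abs.const_mul (1 / d)
        simpa using this
      refine squeeze_zero_norm (fun n => ?_) h1
      have hrn : 0 < r n := hd.trans_le (hr n).1
      rw [norm_mul, Real.norm_of_nonneg (by positivity), Real.norm_eq_abs]
      exact mul_le_mul_of_nonneg_right (one_div_le_one_div_of_le hd (hr n).1) (abs_nonneg _)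
    have hlim : Tendsto (fun n => ⟪A (x n), w - y n⟫ + (1 / r n) * ⟪w - y n, y n - x n⟫) atTop
        (𝓝 ⟪A p, w - p⟫) := by
      have := (hAx.inner ((tendsto_const_nhds (x := w)).sub hyp) (𝕜 := ℝ)).add hr1
      simpa using this
    have hyC : Tendsto y atTop (𝓝[C] p) :=
      tendsto_nhdsWithin_iff.2 ⟨hyp, Eventually.of_forall fun n => (hy n).1⟩
    refine le_of_forall_lt fun m hm => ?_
    obtain ⟨m', hm1, hm2⟩ := exists_between hm
    refine hm1.trans_le (ge_of_tendsto hlim ?_)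
    filter_upwards [hyC.eventually (hfA4lsc w hw p hpC m' hm2)] with n hn
    have h1 := (hy n).2 w hw
    have h2 := hfA2 w hw _ (hy n).1
    linarith
  have hpF : p ∈ F :=
    ⟨⟨hpC, aux_minty C hCcv f hfA1 hfA2 hfA3 hfA4conv hfA4lsc p (A p) hpC hmin⟩, hSp⟩
  refine ⟨p, ⟨hpF, fun v hv => ?_⟩, hxp⟩
  exact le_of_tendsto (hxp.sub_const (x 0)).norm (Eventually.of_forall fun n => hle n v hv)
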